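/- arXiv:2403.11841 — 2 statements merged into one kernel-verified Lean document; each statement's English description precedes it below -/
import Mathlib

section
/- Front-door adjustment identity: in a finite confounded mediated MDP satisfying the front-door criterion, the interventional conditional mean reward under a policy π that chooses the action depending only on the state satisfies E^π(R_t | S_t) = Σ_{a,ã,m} p_m(m|S_t,a) π_t(a|S_t) p_b(ã|S_t) E(R_t | M_t=m, A_t=ã, S_t), where p_b(a|s) = P(A_t=a | S_t=s) is the marginal behavior policy in the observational data and the conditional expectations on the right-hand side are with respect to the observational (confounded) data distribution. -/
open scoped BigOperators

/-- A finite confounded mediated Markov decision process (M2DP) satisfying the front-door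
criterion (Assumption 1): the mediator distribution `pm` depends only on the state and the
action (not on the unmeasured confounder), and the reward distribution `pr` and the transition
distribution `ps` depend on the action only through the mediator (the mediator intercepts every
directed path from the action to the reward and the next state). -/
structure M2DP (S C A M Rw : Type) [Fintype S] [Fintype C] [Fintype A] [Fintype M]
    [Fintype Rw] : Type where
  /-- distribution of the unmeasured confounder given the state -/
  pc : S → C → ℝ
  /-- behavior policy, depending on both the state and the unmeasured confounder -/
  pa : S → C → A → ℝ
  /-- mediator distribution -/
  pm : S → A → M → ℝ
  /-- reward distribution -/
  pr : S → C → M → Rw → ℝ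
  /-- transition distribution -/
  ps : S → C → M → S → ℝ
  /-- initial state distribution -/
  rho0 : S → ℝ
  /-- numerical value of a reward outcome -/
  rval : Rw → ℝ
  /-- discount factor -/
  gamma : ℝ
  /-- bound on rewards -/
  Rmax : ℝ
  pc_nonneg : ∀ s c, 0 ≤ pc s c
  pc_sum : ∀ s, ∑ c, pc s c = 1
  pa_nonneg : ∀ s c a, 0 ≤ pa s c a
  pa_sum : ∀ s c, ∑ a, pa s c a = 1
  pm_nonneg : ∀ s a m, 0 ≤ pm s a m
  pm_sum : ∀ s a, ∑ m, pm s a m = 1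
  pr_nonneg : ∀ s c m rw, 0 ≤ pr s c m rw
  pr_sum : ∀ s c m, ∑ rw, pr s c m rw = 1
  ps_nonneg : ∀ s c m s', 0 ≤ ps s c m s'
  ps_sum : ∀ s c m, ∑ s', ps s c m s' = 1
  rho0_nonneg : ∀ s, 0 ≤ rho0 s
  rho0_sum : ∑ s, rho0 s = 1
  gamma_nonneg : 0 ≤ gamma
  gamma_lt_one : gamma < 1
  rval_bound : ∀ rw, |rval rw| ≤ Rmax

namespace M2DP

/-- Observed history: the first `t` completed state-action-mediator-reward transitions. -/
abbrev Hist (S A M Rw : Type) (t : ℕ) : Type := Fin t → S × A × M × Rw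

/-- A general (possibly history-dependent, nonstationary, stochastic) online policy. -/
structure GPolicy (S A M Rw : Type) [Fintype A] : Type where
  act : (t : ℕ) → Hist S A M Rw t → S → A → ℝ
  act_nonneg : ∀ t h s a, 0 ≤ act t h s a
  act_sum : ∀ t h s, ∑ a, act t h s a = 1

variable {S C A M Rw : Type}
variable [Fintype S] [Fintype C] [Fintype A] [Fintype M] [Fintype Rw]
variable [DecidableEq S] [DecidableEq A] [DecidableEq M] [DecidableEq Rw]
variable [Nonempty S] [Nonempty C] [Nonempty A] [Nonempty M] [Nonempty Rw]

/-- The marginal behavior policy `p_b(a|s) = Σ_c p_a(a|s,c) p_c(c|s)` of the observational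
data. -/
noncomputable def pb (d : M2DP S C A M Rw) (s : S) (a : A) : ℝ :=
  ∑ c, d.pc s c * d.pa s c a

/-- The conditional mean reward given `(s, c, m)`. -/
noncomputable def rbar (d : M2DP S C A M Rw) (s : S) (c : C) (m : M) : ℝ :=
  ∑ rw, d.pr s c m rw * d.rval rw

instance : Nonempty (GPolicy S A M Rw) :=
  ⟨{ act := fun _ _ _ _ => (Fintype.card A : ℝ)⁻¹
     act_nonneg := fun _ _ _ _ => by positivity
     act_sum := fun _ _ _ => by
       simp only [Finset.sum_const, Finset.card_univ, nsmul_eq_mul]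
       exact mul_inv_cancel₀ (by exact_mod_cast Fintype.card_ne_zero) }⟩

/-- A deterministic stationary policy viewed as a general policy. -/
noncomputable def detToG (pol : S → A) : GPolicy S A M Rw where
  act := fun _ _ s a => if a = pol s then 1 else 0
  act_nonneg := fun _ _ s a => by by_cases h : a = pol s <;> simp [h]
  act_sum := fun _ _ s => by simp

/-- Joint density of (history of the first `t` transitions, current state `S_t`) under the
interventional distribution induced by the online policy `π` in the M2DP `d` (the action is
drawn from `π` independently of the confounder, given the state). -/
noncomputable def nu (d : M2DP S C A M Rw) (π : GPolicy S A M Rw) :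
    (t : ℕ) → Hist S A M Rw t → S → ℝ
  | 0, _, s => d.rho0 s
  | t + 1, h, s' =>
      ∑ c,
        nu d π t (fun i => h i.castSucc) (h (Fin.last t)).1 *
          d.pc (h (Fin.last t)).1 c *
          π.act t (fun i => h i.castSucc) (h (Fin.last t)).1 (h (Fin.last t)).2.1 *
          d.pm (h (Fin.last t)).1 (h (Fin.last t)).2.1 (h (Fin.last t)).2.2.1 *
          d.pr (h (Fin.last t)).1 c (h (Fin.last t)).2.2.1 (h (Fin.last t)).2.2.2 *
          d.ps (h (Fin.last t)).1 c (h (Fin.last t)).2.2.1 s'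

/-- The expected reward `E^π[R_t]` at time `t` under the interventional distribution. -/
noncomputable def ErtG (d : M2DP S C A M Rw) (π : GPolicy S A M Rw) (t : ℕ) : ℝ :=
  ∑ h : Hist S A M Rw t, ∑ s, ∑ c, ∑ a, ∑ m,
    nu d π t h s * d.pc s c * π.act t h s a * d.pm s a m * rbar d s c m

/-- The expected discounted interventional return `J(π) = Σ_{t≥0} γ^t E^π[R_t]`. -/
noncomputable def JG (d : M2DP S C A M Rw) (π : GPolicy S A M Rw) : ℝ :=
  ∑' t : ℕ, d.gamma ^ t * ErtG d π t

/-- Joint density of (history, current state) at relative time `k` for the process started at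
time `t0` from the fixed history `h0` and state `s0`, following policy `π`. -/
noncomputable def nuFrom (d : M2DP S C A M Rw) (π : GPolicy S A M Rw) (t0 : ℕ)
    (h0 : Hist S A M Rw t0) (s0 : S) :
    (k : ℕ) → Hist S A M Rw (t0 + k) → S → ℝ
  | 0, h, s => if h = h0 ∧ s = s0 then 1 else 0
  | k + 1, h, s' =>
      ∑ c,
        nuFrom d π t0 h0 s0 k (fun i => h i.castSucc) (h (Fin.last (t0 + k))).1 *
          d.pc (h (Fin.last (t0 + k))).1 c *
          π.act (t0 + k) (fun i => h i.castSucc) (h (Fin.last (t0 + k))).1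
            (h (Fin.last (t0 + k))).2.1 *
          d.pm (h (Fin.last (t0 + k))).1 (h (Fin.last (t0 + k))).2.1
            (h (Fin.last (t0 + k))).2.2.1 *
          d.pr (h (Fin.last (t0 + k))).1 c (h (Fin.last (t0 + k))).2.2.1
            (h (Fin.last (t0 + k))).2.2.2 *
          d.ps (h (Fin.last (t0 + k))).1 c (h (Fin.last (t0 + k))).2.2.1 s'

/-- Expected reward `k` steps after starting at time `t0` from history `h0`, state `s0`. -/
noncomputable def ErtFrom (d : M2DP S C A M Rw) (π : GPolicy S A M Rw) (t0 : ℕ)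
    (h0 : Hist S A M Rw t0) (s0 : S) (k : ℕ) : ℝ :=
  ∑ h : Hist S A M Rw (t0 + k), ∑ s, ∑ c, ∑ a, ∑ m,
    nuFrom d π t0 h0 s0 k h s * d.pc s c * π.act (t0 + k) h s a * d.pm s a m * rbar d s c m

/-- Expected discounted return collected from time `t0` onwards, started at history `h0` and
state `s0`. -/
noncomputable def VFrom (d : M2DP S C A M Rw) (π : GPolicy S A M Rw) (t0 : ℕ)
    (h0 : Hist S A M Rw t0) (s0 : S) : ℝ :=
  ∑' k : ℕ, d.gamma ^ k * ErtFrom d π t0 h0 s0 k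

/-- The mediated Q-function
`Q^π(s,a,m) = Σ_{t≥0} γ^t E^π(R_t | S_0=s, A_0=a, M_0=m, do(A_{1:∞} ~ π))`.
(Under the interventional distribution the confounder `C_0` is independent of `(A_0, M_0)`
given `S_0`, so its conditional law given `(s,a,m)` is `p_c(·|s)`.) -/
noncomputable def Qpi (d : M2DP S C A M Rw) (π : GPolicy S A M Rw)
    (s : S) (a : A) (m : M) : ℝ :=
  ∑ c, d.pc s c * (rbar d s c m +
    d.gamma * ∑ rw, ∑ s', d.pr s c m rw * d.ps s c m s' *
      VFrom d π 1 (fun _ => (s, a, m, rw)) s')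

/-- The mediated optimal Q-function `Q*(s,a,m) = sup_π Q^π(s,a,m)`, the supremum being over
the class of all policies. -/
noncomputable def Qstar (d : M2DP S C A M Rw) (s : S) (a : A) (m : M) : ℝ :=
  ⨆ π : GPolicy S A M Rw, Qpi d π s a m

end M2DP

namespace M2DP

variable {S C A M Rw : Type}
variable [Fintype S] [Fintype C] [Fintype A] [Fintype M] [Fintype Rw]
variable [DecidableEq S] [DecidableEq A] [DecidableEq M] [DecidableEq Rw]
variable [Nonempty S] [Nonempty C] [Nonempty A] [Nonempty M] [Nonempty Rw]

/-- A Markov (time-dependent) online policy, whose action distribution depends only on the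
current state, viewed as a general policy. -/
noncomputable def markovToG (pol : ℕ → S → A → ℝ)
    (h0 : ∀ t s a, 0 ≤ pol t s a) (h1 : ∀ t s, ∑ a, pol t s a = 1) :
    GPolicy S A M Rw where
  act := fun t _ s a => pol t s a
  act_nonneg := fun t _ s a => h0 t s a
  act_sum := fun t _ s => h1 t s

end M2DP

open M2DP in
/-- front-door adjustment identity.  In a finite confounded mediated MDP
satisfying the front-door criterion, for a policy `π` choosing the action depending only on the
state, the interventional conditional mean reward satisfies
`E^π(R_t | S_t = s) = Σ_{a,ã,m} p_m(m|S_t,a) π_t(a|S_t) p_b(ã|S_t) E(R_t | M_t=m, A_t=ã, S_t)`,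
where `p_b` is the marginal behavior policy of the observational data and the conditional
expectation on the right-hand side is with respect to the observational (confounded)
distribution, under which the one-step joint mass at `(s,c,ã,m)` is
`p_c(c|s) p_a(ã|s,c) p_m(m|s,ã)`.  The conditional expectations are written as ratios; the
positivity hypotheses make them well defined. -/
theorem front_door_adjustment
    {S C A M Rw : Type}
    [Fintype S] [Fintype C] [Fintype A] [Fintype M] [Fintype Rw]
    [DecidableEq S] [DecidableEq A] [DecidableEq M] [DecidableEq Rw]
    [Nonempty S] [Nonempty C] [Nonempty A] [Nonempty M] [Nonempty Rw]
    (d : M2DP S C A M Rw)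
    (pol : ℕ → S → A → ℝ)
    (hpol0 : ∀ t s a, 0 ≤ pol t s a) (hpol1 : ∀ t s, ∑ a, pol t s a = 1)
    (t : ℕ) (s : S)
    -- the conditioning event `S_t = s` has positive interventional probability
    (hS : 0 < ∑ h : Hist S A M Rw t, nu d (markovToG pol hpol0 hpol1) t h s)
    -- the observational conditioning events `(M_t = m, A_t = ã, S_t = s)` have positive mass
    (hObs : ∀ ab m, 0 < ∑ c, d.pc s c * d.pa s c ab * d.pm s ab m) :
    (∑ h : Hist S A M Rw t, ∑ c, ∑ a, ∑ m,
        nu d (markovToG pol hpol0 hpol1) t h s * d.pc s c * pol t s a * d.pm s a m *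
          rbar d s c m) /
      (∑ h : Hist S A M Rw t, nu d (markovToG pol hpol0 hpol1) t h s) =
    ∑ a, ∑ ab, ∑ m,
      d.pm s a m * pol t s a * pb d s ab *
        ((∑ c, d.pc s c * d.pa s c ab * d.pm s ab m * rbar d s c m) /
          (∑ c, d.pc s c * d.pa s c ab * d.pm s ab m)) := by
  have key : ∀ ab m, pb d s ab *
        ((∑ c, d.pc s c * d.pa s c ab * d.pm s ab m * rbar d s c m) /
          (∑ c, d.pc s c * d.pa s c ab * d.pm s ab m)) =
        ∑ c, d.pc s c * d.pa s c ab * rbar d s c m := by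
    intro ab m
    have h := hObs ab m
    have e1 : ∑ c, d.pc s c * d.pa s c ab * d.pm s ab m = pb d s ab * d.pm s ab m := by
      rw [pb, Finset.sum_mul]
    have e2 : ∑ c, d.pc s c * d.pa s c ab * d.pm s ab m * rbar d s c m =
        (∑ c, d.pc s c * d.pa s c ab * rbar d s c m) * d.pm s ab m := by
      rw [Finset.sum_mul]
      exact Finset.sum_congr rfl fun c _ => by ring
    rw [e1] at h
    rw [e1, e2]
    have h1 : pb d s ab ≠ 0 := left_ne_zero_of_mul h.ne'
    have h2 : d.pm s ab m ≠ 0 := right_ne_zero_of_mul h.ne'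
    field_simp
  have key2 : ∀ m, ∑ ab, ∑ c, d.pc s c * d.pa s c ab * rbar d s c m =
      ∑ c, d.pc s c * rbar d s c m := by
    intro m
    rw [Finset.sum_comm]
    refine Finset.sum_congr rfl fun c _ => ?_
    rw [← Finset.sum_mul, ← Finset.mul_sum, d.pa_sum, mul_one]
  rw [div_eq_iff hS.ne']
  conv_rhs => rw [Finset.mul_sum]
  refine Finset.sum_congr rfl fun h _ => ?_
  conv_lhs => rw [Finset.sum_comm]
  rw [Finset.sum_mul]
  refine Finset.sum_congr rfl fun a _ => ?_
  conv_lhs => rw [Finset.sum_comm]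
  conv_rhs => rw [Finset.sum_comm, Finset.sum_mul]
  refine Finset.sum_congr rfl fun m _ => ?_
  simp only [mul_assoc (d.pm s a m * pol t s a), key]
  rw [← Finset.mul_sum, key2, Finset.mul_sum, Finset.sum_mul]
  exact Finset.sum_congr rfl fun c _ => by ring
end

section
/- For any mediated Q-function Q : S × A × M → ℝ with sup-norm at most V_max, and for probability mass functions p_b, p̂_b on A (given s) and p_m, p̂_m on M (given s,a), define q(s,a) = Σ_{m,ã} Q(s,ã,m) p_m(m|s,a) p_b(ã|s) and q̄(s,a) = Σ_{m,ã} Q(s,ã,m) p̂_m(m|s,a) p̂_b(ã|s). Then for every (s,a), |q̄(s,a) − q(s,a)| ≤ V_max [ √(2 KL(p_b(·|s) ‖ p̂_b(·|s))) + √(2 KL(p_m(·|s,a) ‖ p̂_m(·|s,a))) ]. -/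
/-!
# Statement 6 (Lemma S3): KL bound on the error of the plug-in unmediated Q-function

For a mediated Q-function `Q` bounded by `Vmax` and estimated pmfs `p̂_b, p̂_m`,
the plug-in quantities `q(s,a) = Σ_{m,ã} Q(s,ã,m) p_m(m|s,a) p_b(ã|s)` and
`q̄(s,a) = Σ_{m,ã} Q(s,ã,m) p̂_m(m|s,a) p̂_b(ã|s)` satisfy
`|q̄(s,a) − q(s,a)| ≤ Vmax [√(2 KL(p_b(·|s)‖p̂_b(·|s))) + √(2 KL(p_m(·|s,a)‖p̂_m(·|s,a)))]`.
The KL divergence is the finite sum `Σ_x p(x) ln(p(x)/q(x))`; the absolute-continuity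
hypotheses express that the KL divergences are finite (by convention KL is `+∞`, and the
claimed bound trivial, otherwise).
-/

open scoped BigOperators

/-- Kullback–Leibler divergence between two probability mass functions on a finite set. -/
noncomputable def klDiv {X : Type} [Fintype X] (p q : X → ℝ) : ℝ :=
  ∑ x, p x * Real.log (p x / q x)

lemma aux_log {t : ℝ} (ht : 0 < t) :
    (5 * t ^ 2 - 4 * t - 1) / (2 * t ^ 2 + 4 * t) ≤ Real.log t := by
  set g : ℝ → ℝ := fun t => Real.log t - (5 * t ^ 2 - 4 * t - 1) / (2 * t ^ 2 + 4 * t) with hg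
  have hd : ∀ x : ℝ, 0 < x → HasDerivAt g ((x - 1) ^ 3 / (x ^ 2 * (x + 2) ^ 2)) x := by
    intro x hx
    have hne : 2 * x ^ 2 + 4 * x ≠ 0 := by positivity
    have h1 : HasDerivAt (fun t : ℝ => 5 * t ^ 2 - 4 * t - 1) (10 * x - 4) x := by
      have := ((((hasDerivAt_id x).pow 2).const_mul 5).sub
        ((hasDerivAt_id x).const_mul 4)).sub_const 1
      refine HasDerivAt.congr_deriv this ?_
      simp; ring
    have h2 : HasDerivAt (fun t : ℝ => 2 * t ^ 2 + 4 * t) (4 * x + 4) x := by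
      have := ((((hasDerivAt_id x).pow 2).const_mul 2).add
        ((hasDerivAt_id x).const_mul 4))
      refine HasDerivAt.congr_deriv this ?_
      simp; ring
    have := (Real.hasDerivAt_log hx.ne').sub (h1.div h2 hne)
    refine HasDerivAt.congr_deriv this ?_
    have h3 : x + 2 ≠ 0 := by positivity
    have h4 : 2 * x ^ 2 + 4 * x = 2 * x * (x + 2) := by ring
    rw [h4]
    field_simp
    ring
  have hg1 : g 1 = 0 := by simp [hg]; norm_num
  suffices h : g 1 ≤ g t by
    rw [hg1] at h
    simp only [hg] at h
    linarith
  rcases le_total t 1 with h | h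
  · have : AntitoneOn g (Set.Icc t 1) := by
      apply antitoneOn_of_deriv_nonpos (convex_Icc t 1)
      · intro x hx
        exact (hd x (ht.trans_le hx.1)).continuousAt.continuousWithinAt
      · intro x hx
        rw [interior_Icc] at hx
        exact (hd x (ht.trans hx.1)).differentiableAt.differentiableWithinAt
      · intro x hx
        rw [interior_Icc] at hx
        rw [(hd x (ht.trans hx.1)).deriv]
        apply div_nonpos_of_nonpos_of_nonneg _ (by positivity)
        have : 0 ≤ (1 - x) ^ 3 := pow_nonneg (by linarith [hx.2]) 3
        nlinarith
    exact this ⟨le_rfl, h⟩ ⟨h, le_rfl⟩ h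
  · have : MonotoneOn g (Set.Icc 1 t) := by
      apply monotoneOn_of_deriv_nonneg (convex_Icc 1 t)
      · intro x hx
        exact (hd x (one_pos.trans_le hx.1)).continuousAt.continuousWithinAt
      · intro x hx
        rw [interior_Icc] at hx
        exact (hd x (one_pos.trans hx.1)).differentiableAt.differentiableWithinAt
      · intro x hx
        rw [interior_Icc] at hx
        rw [(hd x (one_pos.trans hx.1)).deriv]
        have : 0 ≤ (x - 1) ^ 3 := pow_nonneg (by linarith [hx.1]) 3
        positivity
    exact this ⟨le_rfl, h⟩ ⟨h, le_rfl⟩ h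

lemma aux_pt {p q : ℝ} (hp : 0 ≤ p) (hq : 0 ≤ q) (h : q = 0 → p = 0) :
    0 ≤ p * Real.log (p / q) - p + q ∧
    (p - q) ^ 2 ≤ ((2 * p + 4 * q) / 3) * (p * Real.log (p / q) - p + q) := by
  rcases hq.eq_or_lt with hq | hq
  · have := h hq.symm
    subst this
    simp [← hq]
  rcases hp.eq_or_lt with hp | hp
  · subst hp
    refine ⟨by simp [hq.le], ?_⟩
    simp
    nlinarith [sq_nonneg q]
  have hl := aux_log (div_pos hp hq)
  have e : (5 * (p / q) ^ 2 - 4 * (p / q) - 1) / (2 * (p / q) ^ 2 + 4 * (p / q))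
      = (5 * p ^ 2 - 4 * p * q - q ^ 2) / (p * (2 * p + 4 * q)) := by
    have : 2 * p + 4 * q ≠ 0 := by positivity
    have h2 : p + 2 * q ≠ 0 := by positivity
    have h4 : 2 * (p / q) ^ 2 + 4 * (p / q) = (p * (2 * p + 4 * q)) / q ^ 2 := by
      field_simp
    rw [h4]
    field_simp
  rw [e, div_le_iff₀ (by positivity)] at hl
  have key : (p - q) ^ 2 ≤ ((2 * p + 4 * q) / 3) * (p * Real.log (p / q) - p + q) := by
    nlinarith
  refine ⟨?_, key⟩
  have h5 : 0 < (2 * p + 4 * q) / 3 := by positivity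
  exact nonneg_of_mul_nonneg_right ((sq_nonneg _).trans key) h5

lemma aux_pinsker {X : Type} [Fintype X] (p q : X → ℝ) (hp : ∀ x, 0 ≤ p x)
    (hq : ∀ x, 0 ≤ q x) (hp1 : ∑ x, p x = 1) (hq1 : ∑ x, q x = 1)
    (h : ∀ x, q x = 0 → p x = 0) :
    ∑ x, |q x - p x| ≤ Real.sqrt (2 * klDiv p q) := by
  apply Real.le_sqrt_of_sq_le
  have e1 : ∑ x, ((2 * p x + 4 * q x) / 3) = 2 := by
    rw [← Finset.sum_div, Finset.sum_add_distrib, ← Finset.mul_sum, ← Finset.mul_sum, hp1, hq1]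
    norm_num
  have e2 : ∑ x, (p x * Real.log (p x / q x) - p x + q x) = klDiv p q := by
    rw [Finset.sum_add_distrib, Finset.sum_sub_distrib, hp1, hq1]
    simp [klDiv]
  rw [← e1, ← e2]
  apply Finset.sum_sq_le_sum_mul_sum_of_sq_le_mul
  · intro x _
    have := hp x
    have := hq x
    positivity
  · intro x _
    exact (aux_pt (hp x) (hq x) (h x)).1
  · intro x _
    rw [sq_abs]
    have := (aux_pt (hp x) (hq x) (h x)).2
    nlinarith

/-- for any mediated Q-function `Q` with sup-norm at most `Vmax`, and pmfs
`p_b, p̂_b` on `A` (given `s`) and `p_m, p̂_m` on `M` (given `s,a`), the weighted averages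
`q(s,a) = Σ_{m,ã} Q(s,ã,m) p_m(m|s,a) p_b(ã|s)` and
`q̄(s,a) = Σ_{m,ã} Q(s,ã,m) p̂_m(m|s,a) p̂_b(ã|s)` satisfy, for every `(s,a)`,
`|q̄(s,a) − q(s,a)| ≤ Vmax (√(2 KL(p_b‖p̂_b)) + √(2 KL(p_m‖p̂_m)))`. -/
theorem plug_in_q_kl_bound {S A M : Type} [Fintype S] [Fintype A] [Fintype M]
    (Q : S → A → M → ℝ) (Vmax : ℝ) (hQ : ∀ s a m, |Q s a m| ≤ Vmax)
    (pb pbh : S → A → ℝ) (pm pmh : S → A → M → ℝ)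
    (hpb0 : ∀ s a, 0 ≤ pb s a) (hpb1 : ∀ s, ∑ a, pb s a = 1)
    (hpbh0 : ∀ s a, 0 ≤ pbh s a) (hpbh1 : ∀ s, ∑ a, pbh s a = 1)
    (hpm0 : ∀ s a m, 0 ≤ pm s a m) (hpm1 : ∀ s a, ∑ m, pm s a m = 1)
    (hpmh0 : ∀ s a m, 0 ≤ pmh s a m) (hpmh1 : ∀ s a, ∑ m, pmh s a m = 1)
    (hacb : ∀ s a, pbh s a = 0 → pb s a = 0)
    (hacm : ∀ s a m, pmh s a m = 0 → pm s a m = 0)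
    (s : S) (a : A) :
    |(∑ m, ∑ ab, Q s ab m * pmh s a m * pbh s ab) -
        ∑ m, ∑ ab, Q s ab m * pm s a m * pb s ab| ≤
      Vmax * (Real.sqrt (2 * klDiv (fun a' => pb s a') (fun a' => pbh s a')) +
        Real.sqrt (2 * klDiv (fun m => pm s a m) (fun m => pmh s a m))) := by
  have hV : 0 ≤ Vmax := by
    rcases isEmpty_or_nonempty M with hM | ⟨⟨m⟩⟩
    · have := hpm1 s a
      simp at this
    · exact (abs_nonneg _).trans (hQ s a m)
  have h1 := aux_pinsker (fun a' => pb s a') (fun a' => pbh s a') (hpb0 s) (hpbh0 s)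
    (hpb1 s) (hpbh1 s) (hacb s)
  have h2 := aux_pinsker (fun m => pm s a m) (fun m => pmh s a m) (hpm0 s a) (hpmh0 s a)
    (hpm1 s a) (hpmh1 s a) (hacm s a)
  refine le_trans ?_ (mul_le_mul_of_nonneg_left (add_le_add h1 h2) hV)
  have e : (∑ m, ∑ ab, (pmh s a m * |pbh s ab - pb s ab| + pb s ab * |pmh s a m - pm s a m|))
      = ∑ x, |pbh s x - pb s x| + ∑ x, |pmh s a x - pm s a x| := by
    simp only [Finset.sum_add_distrib, ← Finset.mul_sum, ← Finset.sum_mul, hpmh1, hpb1, one_mul]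
  rw [← e, ← Finset.sum_sub_distrib, Finset.mul_sum]
  refine (Finset.abs_sum_le_sum_abs _ _).trans (Finset.sum_le_sum fun m _ => ?_)
  rw [← Finset.sum_sub_distrib, Finset.mul_sum]
  refine (Finset.abs_sum_le_sum_abs _ _).trans (Finset.sum_le_sum fun b _ => ?_)
  have e3 : Q s b m * pmh s a m * pbh s b - Q s b m * pm s a m * pb s b =
    Q s b m * (pmh s a m * (pbh s b - pb s b) + pb s b * (pmh s a m - pm s a m)) := by ring
  rw [e3, abs_mul]
  refine mul_le_mul (hQ s b m) ?_ (abs_nonneg _) hV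
  refine (abs_add_le _ _).trans ?_
  rw [abs_mul, abs_mul, abs_of_nonneg (hpmh0 s a m), abs_of_nonneg (hpb0 s b)]
end
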